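/- arXiv:1801.09789 — 5 statements merged into one kernel-verified Lean document; each statement's English description precedes it below -/
import Mathlib

section
/- Let p ∈ (0,1), h > 0, and let μ be a finite Borel measure on [0, ∞). Then the double integrals ∫₁^∞ ∫_{[0,∞)} ξ^p / ((t − ξ)² + h²ξ^{2p}) dμ(t) dξ and ∫₁^∞ ∫_{[0,∞)} t² ξ^{p−2} / ((t − ξ)² + h²ξ^{2p}) dμ(t) dξ are both finite. -/
open MeasureTheory

/-!
The point is that `∫ ξ in [a, ∞), ξ ^ p / ((t - ξ) ^ 2 + h ^ 2 * ξ ^ (2 * p))` is bounded uniformly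
in `t : ℝ` for each `a > 0`; Tonelli's theorem then gives the claim for every finite `μ`.

Where `ξ / 2 ≤ |t - ξ|`, the integrand is at most `4 * ξ ^ (p - 2)`, which is integrable at infinity
because `p < 1`. Where `|t - ξ| < ξ / 2`, the numbers `t` and `ξ` agree up to a factor `2`, so
`ξ ^ p` may be replaced by `t ^ p` at the cost of a constant factor; what remains is a Poisson
kernel `y / ((ξ - t) ^ 2 + y ^ 2)` of fixed height `y = |h| * t ^ p`, whose integral is `π`.

The second integrand reduces to the first by `t ^ 2 ≤ 2 * (t - ξ) ^ 2 + 2 * ξ ^ 2`.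
-/

lemma rpow_le_rpow_abs_mul_rpow {c x y : ℝ} (hx : 0 < x) (hy : 0 < y) (hxy : x ≤ c * y)
    (hyx : y ≤ c * x) (p : ℝ) : x ^ p ≤ c ^ |p| * y ^ p := by
  have hc : 0 < c := pos_of_mul_pos_left (hx.trans_le hxy) hy.le
  rcases le_total 0 p with hp | hp
  · rw [abs_of_nonneg hp, ← Real.mul_rpow hc.le hy.le]
    exact Real.rpow_le_rpow hx.le hxy hp
  · rw [abs_of_nonpos hp, Real.rpow_neg hc.le, ← div_eq_inv_mul,
      le_div_iff₀' (Real.rpow_pos_of_pos hc p), ← Real.mul_rpow hc.le hx.le]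
    exact Real.rpow_le_rpow_of_nonpos hy hyx hp

lemma div_sq_add_sq_le_pow_three_mul {c y z : ℝ} (hy : 0 < y) (hz : 0 < z) (hyz : y ≤ c * z)
    (hzy : z ≤ c * y) (x : ℝ) : y / (x ^ 2 + y ^ 2) ≤ c ^ 3 * (z / (x ^ 2 + z ^ 2)) := by
  have hc : 0 < c := pos_of_mul_pos_left (hy.trans_le hyz) hz.le
  have hc_one : 1 ≤ c ^ 2 := by
    refine le_of_mul_le_mul_right ?_ hy
    calc 1 * y ≤ c * z := by rwa [one_mul]
      _ ≤ c * (c * y) := by gcongr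
      _ = c ^ 2 * y := by ring
  have h_denom : x ^ 2 + z ^ 2 ≤ c ^ 2 * (x ^ 2 + y ^ 2) :=
    calc x ^ 2 + z ^ 2 ≤ c ^ 2 * x ^ 2 + (c * y) ^ 2 := by
          gcongr
          exact le_mul_of_one_le_left (sq_nonneg x) hc_one
      _ = c ^ 2 * (x ^ 2 + y ^ 2) := by ring
  calc y / (x ^ 2 + y ^ 2) = c ^ 2 * y / (c ^ 2 * (x ^ 2 + y ^ 2)) :=
        (mul_div_mul_left _ _ (by positivity)).symm
    _ ≤ c ^ 2 * (c * z) / (x ^ 2 + z ^ 2) := by gcongr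
    _ = c ^ 3 * (z / (x ^ 2 + z ^ 2)) := by ring

lemma lintegral_ofReal_div_sub_sq_add_sq_le_pi (x₀ y : ℝ) :
    ∫⁻ x, ENNReal.ofReal (y / ((x - x₀) ^ 2 + y ^ 2)) ≤ ENNReal.ofReal Real.pi := by
  rcases le_or_gt y 0 with hy | hy
  · have h_zero (x : ℝ) : ENNReal.ofReal (y / ((x - x₀) ^ 2 + y ^ 2)) = 0 :=
      ENNReal.ofReal_of_nonpos (div_nonpos_of_nonpos_of_nonneg hy (by positivity))
    simp only [h_zero, lintegral_zero, zero_le]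
  · lift y to NNReal using hy.le
    have h_pdf (x : ℝ) : ENNReal.ofReal (y / ((x - x₀) ^ 2 + (y : ℝ) ^ 2)) =
        ENNReal.ofReal Real.pi * ProbabilityTheory.cauchyPDF x₀ y x := by
      rw [ProbabilityTheory.cauchyPDF_def, ProbabilityTheory.cauchyPDFReal_def,
        ← ENNReal.ofReal_mul Real.pi_pos.le, mul_assoc,
        mul_inv_cancel_left₀ Real.pi_ne_zero, div_eq_mul_inv]
    have hy_ne : y ≠ 0 := by exact_mod_cast hy.ne'
    simp only [h_pdf]
    rw [lintegral_const_mul _ (by fun_prop),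
      ProbabilityTheory.lintegral_cauchyPDF_eq_one x₀ hy_ne, mul_one]

lemma setLIntegral_Ici_ofReal_rpow_lt_top {a s : ℝ} (ha : 0 < a) (hs : s < -1) :
    ∫⁻ ξ in Set.Ici a, ENNReal.ofReal (ξ ^ s) < ⊤ := by
  refine IntegrableOn.setLIntegral_lt_top ?_
  rw [integrableOn_Ici_iff_integrableOn_Ioi]
  exact integrableOn_Ioi_rpow_of_lt hs ha

lemma lintegral_lintegral_lt_top_of_forall_le {α β : Type*} [MeasurableSpace α]
    [MeasurableSpace β] {ν : Measure α} {μ : Measure β} [SFinite ν] [IsFiniteMeasure μ]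
    {f : α → β → ENNReal} (hf : AEMeasurable (Function.uncurry f) (ν.prod μ)) {C : ENNReal}
    (hC : C < ⊤) (hfC : ∀ t, ∫⁻ ξ, f ξ t ∂ν ≤ C) : ∫⁻ ξ, ∫⁻ t, f ξ t ∂μ ∂ν < ⊤ :=
  calc ∫⁻ ξ, ∫⁻ t, f ξ t ∂μ ∂ν = ∫⁻ t, ∫⁻ ξ, f ξ t ∂ν ∂μ := lintegral_lintegral_swap hf
    _ ≤ ∫⁻ _, C ∂μ := lintegral_mono hfC
    _ = C * μ Set.univ := lintegral_const C
    _ < ⊤ := ENNReal.mul_lt_top hC (measure_lt_top μ _)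

/-- The squared distance `|t - z|²` from the real number `t` to the point `z = ξ + i h ξ ^ p` of the
parabola of exponent `p` and opening `h`, for `0 ≤ ξ`. It is the denominator of the spectral
representation of the squared resolvent norm at `z`. -/
noncomputable def parabolaDistSq (p h ξ t : ℝ) : ℝ :=
  (t - ξ) ^ 2 + h ^ 2 * ξ ^ (2 * p)

section Parabola

variable {p h ξ : ℝ}

lemma parabolaDistSq_eq_add_sq (hξ : 0 ≤ ξ) (t : ℝ) :
    parabolaDistSq p h ξ t = (t - ξ) ^ 2 + (|h| * ξ ^ p) ^ 2 := by
  rw [parabolaDistSq, mul_pow, sq_abs, mul_comm 2 p, Real.rpow_mul hξ, Real.rpow_two]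

lemma sub_sq_le_parabolaDistSq (hξ : 0 ≤ ξ) (t : ℝ) : (t - ξ) ^ 2 ≤ parabolaDistSq p h ξ t :=
  le_add_of_nonneg_right (by positivity)

lemma parabolaDistSq_pos (hh : h ≠ 0) (hξ : 0 < ξ) (t : ℝ) : 0 < parabolaDistSq p h ξ t := by
  unfold parabolaDistSq
  positivity

lemma rpow_div_parabolaDistSq_le_of_half_le_abs_sub {t : ℝ} (hξ : 0 < ξ)
    (ht : ξ / 2 ≤ |t - ξ|) : ξ ^ p / parabolaDistSq p h ξ t ≤ 4 * ξ ^ (p - 2) := by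
  have h_dist : ξ ^ 2 / 4 ≤ parabolaDistSq p h ξ t :=
    calc ξ ^ 2 / 4 = (ξ / 2) ^ 2 := by ring
      _ ≤ |t - ξ| ^ 2 := by gcongr
      _ = (t - ξ) ^ 2 := sq_abs _
      _ ≤ parabolaDistSq p h ξ t := sub_sq_le_parabolaDistSq hξ.le t
  calc ξ ^ p / parabolaDistSq p h ξ t ≤ ξ ^ p / (ξ ^ 2 / 4) := by gcongr
    _ = 4 * (ξ ^ p / ξ ^ 2) := by ring
    _ = 4 * ξ ^ (p - 2) := by rw [Real.rpow_sub hξ, Real.rpow_two]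

lemma rpow_div_parabolaDistSq_le_of_abs_sub_lt_half {t : ℝ} (hh : h ≠ 0) (hξ : 0 < ξ)
    (ht : |t - ξ| < ξ / 2) :
    ξ ^ p / parabolaDistSq p h ξ t ≤
      (2 ^ |p|) ^ 3 / |h| * (|h| * t ^ p / ((ξ - t) ^ 2 + (|h| * t ^ p) ^ 2)) := by
  obtain ⟨h_lower, h_upper⟩ := abs_lt.1 ht
  have ht_pos : 0 < t := by linarith
  have hh_abs : 0 < |h| := abs_pos.2 hh
  have h_le : |h| * ξ ^ p ≤ 2 ^ |p| * (|h| * t ^ p) := by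
    rw [mul_left_comm]
    gcongr
    exact rpow_le_rpow_abs_mul_rpow hξ ht_pos (by linarith) (by linarith) p
  have h_ge : |h| * t ^ p ≤ 2 ^ |p| * (|h| * ξ ^ p) := by
    rw [mul_left_comm]
    gcongr
    exact rpow_le_rpow_abs_mul_rpow ht_pos hξ (by linarith) (by linarith) p
  calc ξ ^ p / parabolaDistSq p h ξ t
      = |h| * ξ ^ p / ((ξ - t) ^ 2 + (|h| * ξ ^ p) ^ 2) / |h| := by
        rw [parabolaDistSq_eq_add_sq hξ.le, sub_sq_comm, div_right_comm,
          mul_div_cancel_left₀ _ hh_abs.ne']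
    _ ≤ (2 ^ |p|) ^ 3 * (|h| * t ^ p / ((ξ - t) ^ 2 + (|h| * t ^ p) ^ 2)) / |h| := by
        gcongr
        exact div_sq_add_sq_le_pow_three_mul (by positivity) (by positivity) h_le h_ge _
    _ = (2 ^ |p|) ^ 3 / |h| * (|h| * t ^ p / ((ξ - t) ^ 2 + (|h| * t ^ p) ^ 2)) := by ring

lemma ofReal_rpow_div_parabolaDistSq_le (hh : h ≠ 0) (hξ : 0 < ξ) (t : ℝ) :
    ENNReal.ofReal (ξ ^ p / parabolaDistSq p h ξ t) ≤
      ENNReal.ofReal 4 * ENNReal.ofReal (ξ ^ (p - 2)) + ENNReal.ofReal ((2 ^ |p|) ^ 3 / |h|) *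
        ENNReal.ofReal (|h| * t ^ p / ((ξ - t) ^ 2 + (|h| * t ^ p) ^ 2)) := by
  rw [← ENNReal.ofReal_mul (by positivity), ← ENNReal.ofReal_mul (by positivity)]
  rcases le_or_gt (ξ / 2) |t - ξ| with h_far | h_near
  · exact le_add_right
      (ENNReal.ofReal_le_ofReal (rpow_div_parabolaDistSq_le_of_half_le_abs_sub hξ h_far))
  · exact le_add_left
      (ENNReal.ofReal_le_ofReal (rpow_div_parabolaDistSq_le_of_abs_sub_lt_half hh hξ h_near))

lemma sq_mul_rpow_div_parabolaDistSq_le (hh : h ≠ 0) (hξ : 0 < ξ) (t : ℝ) :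
    t ^ 2 * ξ ^ (p - 2) / parabolaDistSq p h ξ t ≤
      2 * ξ ^ (p - 2) + 2 * (ξ ^ p / parabolaDistSq p h ξ t) := by
  have h_pos : 0 < parabolaDistSq p h ξ t := parabolaDistSq_pos hh hξ t
  have h_sq : t ^ 2 ≤ 2 * parabolaDistSq p h ξ t + 2 * ξ ^ 2 := by
    have h_dist : (t - ξ) ^ 2 ≤ parabolaDistSq p h ξ t := sub_sq_le_parabolaDistSq hξ.le t
    nlinarith [sq_nonneg (t - 2 * ξ)]
  have h_rpow : ξ ^ 2 * ξ ^ (p - 2) = ξ ^ p := by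
    rw [← Real.rpow_two, ← Real.rpow_add hξ, add_sub_cancel]
  calc t ^ 2 * ξ ^ (p - 2) / parabolaDistSq p h ξ t
      ≤ (2 * parabolaDistSq p h ξ t + 2 * ξ ^ 2) * ξ ^ (p - 2) / parabolaDistSq p h ξ t := by
        gcongr
    _ = 2 * ξ ^ (p - 2) + 2 * (ξ ^ 2 * ξ ^ (p - 2) / parabolaDistSq p h ξ t) := by
        field_simp
    _ = 2 * ξ ^ (p - 2) + 2 * (ξ ^ p / parabolaDistSq p h ξ t) := by rw [h_rpow]

variable {a : ℝ}

lemma exists_forall_setLIntegral_rpow_div_parabolaDistSq_le (hp : p < 1) (hh : h ≠ 0)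
    (ha : 0 < a) :
    ∃ C < ⊤, ∀ t, ∫⁻ ξ in Set.Ici a, ENNReal.ofReal (ξ ^ p / parabolaDistSq p h ξ t) ≤ C := by
  have h_tail : ∫⁻ ξ in Set.Ici a, ENNReal.ofReal (ξ ^ (p - 2)) < ⊤ :=
    setLIntegral_Ici_ofReal_rpow_lt_top ha (by linarith)
  refine ⟨ENNReal.ofReal 4 * (∫⁻ ξ in Set.Ici a, ENNReal.ofReal (ξ ^ (p - 2))) +
    ENNReal.ofReal ((2 ^ |p|) ^ 3 / |h|) * ENNReal.ofReal Real.pi, by finiteness, fun t ↦ ?_⟩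
  refine (setLIntegral_mono' measurableSet_Ici fun ξ hξ ↦
    ofReal_rpow_div_parabolaDistSq_le hh (ha.trans_le hξ) t).trans ?_
  rw [lintegral_add_left (by fun_prop), lintegral_const_mul _ (by fun_prop),
    lintegral_const_mul _ (by fun_prop)]
  gcongr
  exact (setLIntegral_le_lintegral _ _).trans (lintegral_ofReal_div_sub_sq_add_sq_le_pi t _)

lemma exists_forall_setLIntegral_sq_mul_rpow_div_parabolaDistSq_le (hp : p < 1) (hh : h ≠ 0)
    (ha : 0 < a) :
    ∃ C < ⊤, ∀ t, ∫⁻ ξ in Set.Ici a,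
      ENNReal.ofReal (t ^ 2 * ξ ^ (p - 2) / parabolaDistSq p h ξ t) ≤ C := by
  obtain ⟨C, hC, h_le⟩ := exists_forall_setLIntegral_rpow_div_parabolaDistSq_le hp hh ha
  have h_tail : ∫⁻ ξ in Set.Ici a, ENNReal.ofReal (ξ ^ (p - 2)) < ⊤ :=
    setLIntegral_Ici_ofReal_rpow_lt_top ha (by linarith)
  have h_pointwise (t ξ : ℝ) (hξ : ξ ∈ Set.Ici a) :
      ENNReal.ofReal (t ^ 2 * ξ ^ (p - 2) / parabolaDistSq p h ξ t) ≤
        ENNReal.ofReal 2 * ENNReal.ofReal (ξ ^ (p - 2)) +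
          ENNReal.ofReal 2 * ENNReal.ofReal (ξ ^ p / parabolaDistSq p h ξ t) := by
    rw [← ENNReal.ofReal_mul zero_le_two, ← ENNReal.ofReal_mul zero_le_two]
    exact (ENNReal.ofReal_le_ofReal
      (sq_mul_rpow_div_parabolaDistSq_le hh (ha.trans_le hξ) t)).trans ENNReal.ofReal_add_le
  refine ⟨ENNReal.ofReal 2 * (∫⁻ ξ in Set.Ici a, ENNReal.ofReal (ξ ^ (p - 2))) +
    ENNReal.ofReal 2 * C, by finiteness, fun t ↦ ?_⟩
  refine (setLIntegral_mono' measurableSet_Ici (h_pointwise t)).trans ?_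
  rw [lintegral_add_left (by fun_prop), lintegral_const_mul _ (by fun_prop),
    lintegral_const_mul' _ _ ENNReal.ofReal_ne_top]
  gcongr
  exact h_le t

end Parabola

theorem stmt12_general {p h a : ℝ} (hp : p < 1) (hh : h ≠ 0) (ha : 0 < a)
    (μ : Measure ℝ) [IsFiniteMeasure μ] :
    (∫⁻ ξ in Set.Ici a, ∫⁻ t,
        ENNReal.ofReal (ξ ^ p / ((t - ξ) ^ 2 + h ^ 2 * ξ ^ (2 * p))) ∂μ) < ⊤ ∧
    (∫⁻ ξ in Set.Ici a, ∫⁻ t,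
        ENNReal.ofReal (t ^ 2 * ξ ^ (p - 2) / ((t - ξ) ^ 2 + h ^ 2 * ξ ^ (2 * p))) ∂μ) < ⊤ := by
  obtain ⟨C₁, hC₁, h_le₁⟩ := exists_forall_setLIntegral_rpow_div_parabolaDistSq_le hp hh ha
  obtain ⟨C₂, hC₂, h_le₂⟩ :=
    exists_forall_setLIntegral_sq_mul_rpow_div_parabolaDistSq_le hp hh ha
  exact ⟨lintegral_lintegral_lt_top_of_forall_le (by unfold Function.uncurry; fun_prop) hC₁ h_le₁,
    lintegral_lintegral_lt_top_of_forall_le (by unfold Function.uncurry; fun_prop) hC₂ h_le₂⟩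

/-- For `p ∈ (0,1)`, `h > 0` and a finite Borel measure `μ` on `[0,∞)`
(formalized as a finite measure on `ℝ` vanishing on `(-∞,0)`), the double integrals
`∫₁^∞ ∫ ξ^p / ((t−ξ)² + h²ξ^{2p}) dμ(t) dξ` and
`∫₁^∞ ∫ t²ξ^{p−2} / ((t−ξ)² + h²ξ^{2p}) dμ(t) dξ` are both finite. -/
theorem stmt12 (p h : ℝ) (hp : p ∈ Set.Ioo (0 : ℝ) 1) (hh : 0 < h)
    (μ : Measure ℝ) [IsFiniteMeasure μ] (hμ : μ (Set.Iio 0) = 0) :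
    (∫⁻ ξ in Set.Ici (1 : ℝ), ∫⁻ t,
        ENNReal.ofReal (ξ ^ p / ((t - ξ) ^ 2 + h ^ 2 * ξ ^ (2 * p))) ∂μ) < ⊤ ∧
    (∫⁻ ξ in Set.Ici (1 : ℝ), ∫⁻ t,
        ENNReal.ofReal (t ^ 2 * ξ ^ (p - 2) / ((t - ξ) ^ 2 + h ^ 2 * ξ ^ (2 * p))) ∂μ) < ⊤ :=
  stmt12_general hp.2 hh.ne' one_pos μ
end

section
/- Let p ∈ [0,1), b₁ > 0, and let (r_n)_{n≥1} be an increasing sequence of positive real numbers satisfying r_{n+1} ≥ r_n + b₁(r_n^p + r_{n+1}^p) for all n. Set c = b₁(1−p). Then there exists n₀ ∈ ℕ such that |r_j − r_n| ≥ c · max(r_j^p, r_n^p) · |j − n| for all j, n ≥ n₀. -/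
/-!
The map `x ↦ x ^ (1 - p)` straightens the sequence. By weighted AM-GM, a gap `y - x ≥ b * y ^ p`
forces `y ^ (1 - p) - x ^ (1 - p) ≥ b * (1 - p)`, so `r n ^ (1 - p)` grows at least linearly with
slope `b * (1 - p)`. Multiplying by the larger power `y ^ p` gives the separation back, since
`y ^ p * (y ^ (1 - p) - x ^ (1 - p)) ≤ y - x` for `x ≤ y`.
-/

section RpowIncrements

variable {b p x y : ℝ}

theorem rpow_mul_rpow_one_sub (hx : 0 ≤ x) (p : ℝ) : x ^ p * x ^ (1 - p) = x := by
  rw [← Real.rpow_add' hx (by simp), add_sub_cancel, Real.rpow_one]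

theorem one_sub_mul_sub_le_rpow_mul_sub_rpow (hp₀ : 0 ≤ p) (hp₁ : p ≤ 1) (hx : 0 ≤ x)
    (hy : 0 ≤ y) : (1 - p) * (y - x) ≤ y ^ p * (y ^ (1 - p) - x ^ (1 - p)) := by
  have amgm : y ^ p * x ^ (1 - p) ≤ p * y + (1 - p) * x :=
    Real.geom_mean_le_arith_mean2_weighted hp₀ (sub_nonneg.2 hp₁) hy hx (add_sub_cancel p 1)
  rw [mul_sub (y ^ p), rpow_mul_rpow_one_sub hy]
  linarith

theorem rpow_mul_sub_rpow_le_sub (hp : 0 ≤ p) (hx : 0 ≤ x) (hxy : x ≤ y) :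
    y ^ p * (y ^ (1 - p) - x ^ (1 - p)) ≤ y - x :=
  calc y ^ p * (y ^ (1 - p) - x ^ (1 - p))
      = y - y ^ p * x ^ (1 - p) := by rw [mul_sub, rpow_mul_rpow_one_sub (hx.trans hxy)]
    _ ≤ y - x ^ p * x ^ (1 - p) := by gcongr
    _ = y - x := by rw [rpow_mul_rpow_one_sub hx]

theorem mul_one_sub_le_rpow_sub_rpow (hp₀ : 0 ≤ p) (hp₁ : p ≤ 1) (hx : 0 ≤ x) (hy : 0 < y)
    (hgap : x + b * y ^ p ≤ y) : b * (1 - p) ≤ y ^ (1 - p) - x ^ (1 - p) := by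
  refine le_of_mul_le_mul_left ?_ (Real.rpow_pos_of_pos hy p)
  calc y ^ p * (b * (1 - p))
      = (1 - p) * (b * y ^ p) := by ring
    _ ≤ (1 - p) * (y - x) :=
        mul_le_mul_of_nonneg_left (le_sub_iff_add_le'.2 hgap) (sub_nonneg.2 hp₁)
    _ ≤ y ^ p * (y ^ (1 - p) - x ^ (1 - p)) :=
        one_sub_mul_sub_le_rpow_mul_sub_rpow hp₀ hp₁ hx hy.le

end RpowIncrements

theorem mul_natCast_sub_le_sub_of_le_succ_sub {R : Type*} [Ring R] [PartialOrder R]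
    [IsOrderedAddMonoid R] {u : ℕ → R} {c : R} (h : ∀ n, c ≤ u (n + 1) - u n) {m n : ℕ}
    (hmn : m ≤ n) : c * ((n : R) - m) ≤ u n - u m := by
  induction n, hmn using Nat.le_induction with
  | base => simp
  | succ n _ ih =>
    calc c * (((n + 1 : ℕ) : R) - m)
        = c * ((n : R) - m) + c := by push_cast; noncomm_ring
      _ ≤ (u n - u m) + (u (n + 1) - u n) := add_le_add ih (h n)
      _ = u (n + 1) - u m := by abel

section Sequence

variable {b p : ℝ} {r : ℕ → ℝ}

theorem monotone_of_add_mul_rpow_le (hb : 0 ≤ b) (hpos : ∀ n, 0 < r n)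
    (hgap : ∀ n, r n + b * r (n + 1) ^ p ≤ r (n + 1)) : Monotone r :=
  monotone_nat_of_le_succ fun n ↦
    (le_add_of_nonneg_right (mul_nonneg hb (Real.rpow_nonneg (hpos (n + 1)).le p))).trans (hgap n)

theorem mul_rpow_mul_natCast_sub_le_sub (hp₀ : 0 ≤ p) (hp₁ : p ≤ 1) (hpos : ∀ n, 0 < r n)
    (hmono : Monotone r) (hgap : ∀ n, r n + b * r (n + 1) ^ p ≤ r (n + 1)) {n j : ℕ}
    (hnj : n ≤ j) : b * (1 - p) * r j ^ p * ((j : ℝ) - n) ≤ r j - r n := by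
  have linear_growth : b * (1 - p) * ((j : ℝ) - n) ≤ r j ^ (1 - p) - r n ^ (1 - p) :=
    mul_natCast_sub_le_sub_of_le_succ_sub (u := fun n ↦ r n ^ (1 - p))
      (fun n ↦ mul_one_sub_le_rpow_sub_rpow hp₀ hp₁ (hpos n).le (hpos (n + 1)) (hgap n)) hnj
  calc b * (1 - p) * r j ^ p * ((j : ℝ) - n)
      = r j ^ p * (b * (1 - p) * ((j : ℝ) - n)) := by ring
    _ ≤ r j ^ p * (r j ^ (1 - p) - r n ^ (1 - p)) :=
        mul_le_mul_of_nonneg_left linear_growth (Real.rpow_nonneg (hpos j).le p)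
    _ ≤ r j - r n := rpow_mul_sub_rpow_le_sub hp₀ (hpos n).le (hmono hnj)

theorem stmt14_general (hp₀ : 0 ≤ p) (hp₁ : p ≤ 1) (hb : 0 ≤ b) (hpos : ∀ n, 0 < r n)
    (hgap : ∀ n, r n + b * r (n + 1) ^ p ≤ r (n + 1)) (j n : ℕ) :
    b * (1 - p) * max (r j ^ p) (r n ^ p) * |(j : ℝ) - (n : ℝ)| ≤ |r j - r n| := by
  have hmono : Monotone r := monotone_of_add_mul_rpow_le hb hpos hgap
  wlog hnj : n ≤ j generalizing j n
  · simpa only [max_comm, abs_sub_comm] using this n j (le_of_not_ge hnj)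
  have hpow : r n ^ p ≤ r j ^ p := Real.rpow_le_rpow (hpos n).le (hmono hnj) hp₀
  rw [max_eq_left hpow, abs_of_nonneg (sub_nonneg.2 (Nat.cast_le.2 hnj)),
    abs_of_nonneg (sub_nonneg.2 (hmono hnj))]
  exact mul_rpow_mul_natCast_sub_le_sub hp₀ hp₁ hpos hmono hgap hnj

end Sequence

/-- Let `p ∈ [0,1)`, `b₁ > 0`, and let `(r_n)` be an increasing sequence of
positive reals with `r_{n+1} ≥ r_n + b₁(r_n^p + r_{n+1}^p)`.  With `c = b₁(1−p)`, there is `n₀`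
such that `|r_j − r_n| ≥ c · max(r_j^p, r_n^p) · |j − n|` for all `j, n ≥ n₀`. -/
theorem stmt14 (p b₁ : ℝ) (hp : p ∈ Set.Ico (0 : ℝ) 1) (hb₁ : 0 < b₁)
    (r : ℕ → ℝ) (hpos : ∀ n, 0 < r n) (hmono : StrictMono r)
    (hsep : ∀ n, r n + b₁ * (r n ^ p + r (n + 1) ^ p) ≤ r (n + 1)) :
    ∃ n₀ : ℕ, ∀ j n : ℕ, n₀ ≤ j → n₀ ≤ n →
      b₁ * (1 - p) * max (r j ^ p) (r n ^ p) * |(j : ℝ) - (n : ℝ)| ≤ |r j - r n| := by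
  refine ⟨0, fun j n _ _ ↦ stmt14_general hp.1 hp.2.le hb₁.le hpos (fun m ↦ ?_) j n⟩
  linarith only [hsep m, mul_nonneg hb₁.le (Real.rpow_nonneg (hpos m).le p)]
end

section
/- Let p ∈ [0,1), b₁ > 0, c > 0, and let (r_j)_{j≥1} be an increasing sequence of positive real numbers satisfying |r_j − r_n| ≥ c · max(r_j^p, r_n^p) · |j − n| for all j, n ≥ 1. Then there exists a constant C > 0, depending only on b₁ and c, such that for every t > 0 with |t − r_j| ≥ b₁ r_j^p for all j, the series Σ_{j=1}^∞ r_j^{2p}/(t − r_j)² converges and Σ_{j=1}^∞ r_j^{2p}/(t − r_j)² ≤ C. -/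
/-!
Among finitely many points `x j`, let `x n` be one nearest to `t`. By the triangle inequality every
point satisfies `dist (x j) (x n) ≤ 2 * dist t (x j)`, so the separation of the points from each
other turns into `c / 2 * |j - n| * w j ≤ dist t (x j)`. Every finite partial sum is therefore at
most `1 / b ^ 2`, from the term `j = n`, plus `4 / c ^ 2` times a partial sum of `∑ 1 / m ^ 2` over
the nonzero integers `m`.
-/

section SeparatedPoints

open Real

variable {E : Type*} [PseudoMetricSpace E] {t : E} {b c : ℝ}

lemma pow_div_pow_le_one_div_pow {a w d : ℝ} (ha : 0 < a) (hw : 0 ≤ w) (h : a * w ≤ d) (q : ℕ) :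
    w ^ q / d ^ q ≤ 1 / a ^ q := by
  have hd : 0 ≤ d := (mul_nonneg ha.le hw).trans h
  have hdiv : w / d ≤ 1 / a :=
    div_le_of_le_mul₀ hd (one_div_nonneg.2 ha.le) (by rwa [one_div, le_inv_mul_iff₀ ha])
  calc w ^ q / d ^ q = (w / d) ^ q := (div_pow w d q).symm
    _ ≤ (1 / a) ^ q := pow_le_pow_left₀ (div_nonneg hw hd) hdiv q
    _ = 1 / a ^ q := one_div_pow a q

lemma dist_le_two_mul_dist_of_dist_le {x y : E} (h : dist t y ≤ dist t x) :
    dist x y ≤ 2 * dist t x := by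
  linarith [dist_triangle_left x y t]

lemma exists_mem_forall_half_mul_dist_le {ι : Type*} [Dist ι] {x : ι → E} {w : ι → ℝ}
    {s : Finset ι} (hs : s.Nonempty)
    (hsep : ∀ j n, c * w j * dist j n ≤ dist (x j) (x n)) :
    ∃ n ∈ s, ∀ j ∈ s, c / 2 * dist j n * w j ≤ dist t (x j) := by
  obtain ⟨n, hn, hnearest⟩ := s.exists_min_image (fun j => dist t (x j)) hs
  refine ⟨n, hn, fun j hj => ?_⟩
  linarith [hsep j n, dist_le_two_mul_dist_of_dist_le (hnearest j hj)]

-- The term `m = 0` is `1 / 0 = 0`.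
lemma hasSum_one_div_int_sq : HasSum (fun m : ℤ => 1 / (m : ℝ) ^ 2) (π ^ 2 / 3) := by
  have hval : π ^ 2 / 3 = π ^ 2 / 6 + π ^ 2 / 6 - 1 / ((0 : ℤ) : ℝ) ^ 2 := by
    norm_num
    ring
  rw [hval]
  exact HasSum.of_nat_of_neg (f := fun m : ℤ => 1 / (m : ℝ) ^ 2)
    (by simpa using hasSum_zeta_two) (by simpa using hasSum_zeta_two)

lemma sum_one_div_natDist_sq_le (s : Finset ℕ) (n : ℕ) :
    ∑ j ∈ s, 1 / dist j n ^ 2 ≤ π ^ 2 / 3 := by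
  have hinj : Function.Injective fun j : ℕ => (j : ℤ) - n := fun i j hij => by simpa using hij
  calc ∑ j ∈ s, 1 / dist j n ^ 2 = ∑ m ∈ s.map ⟨_, hinj⟩, 1 / (m : ℝ) ^ 2 := by
        simp [Nat.dist_eq]
    _ ≤ π ^ 2 / 3 :=
        sum_le_hasSum _ (fun m _ => by positivity) hasSum_one_div_int_sq

lemma sum_sq_div_dist_sq_le {x : ℕ → E} {w : ℕ → ℝ} (hb : 0 < b) (hc : 0 < c)
    (hw : ∀ j, 0 ≤ w j) (hsep : ∀ j n, c * w j * dist j n ≤ dist (x j) (x n))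
    (hgap : ∀ j, b * w j ≤ dist t (x j)) (s : Finset ℕ) :
    ∑ j ∈ s, w j ^ 2 / dist t (x j) ^ 2 ≤ 1 / b ^ 2 + 4 * π ^ 2 / (3 * c ^ 2) := by
  obtain rfl | hs := s.eq_empty_or_nonempty
  · rw [Finset.sum_empty]
    positivity
  obtain ⟨n, hn, hfar⟩ := exists_mem_forall_half_mul_dist_le (t := t) hs hsep
  have hnear : w n ^ 2 / dist t (x n) ^ 2 ≤ 1 / b ^ 2 :=
    pow_div_pow_le_one_div_pow hb (hw n) (hgap n) 2
  have hterm : ∀ j ∈ s.erase n,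
      w j ^ 2 / dist t (x j) ^ 2 ≤ 1 / (c / 2 * dist j n) ^ 2 := fun j hj => by
    have hpos : 0 < c / 2 * dist j n :=
      mul_pos (half_pos hc) (dist_pos.2 (Finset.ne_of_mem_erase hj))
    exact pow_div_pow_le_one_div_pow hpos (hw j) (hfar j (Finset.mem_of_mem_erase hj)) 2
  calc ∑ j ∈ s, w j ^ 2 / dist t (x j) ^ 2
      = w n ^ 2 / dist t (x n) ^ 2 + ∑ j ∈ s.erase n, w j ^ 2 / dist t (x j) ^ 2 :=
        (Finset.add_sum_erase s _ hn).symm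
    _ ≤ 1 / b ^ 2 + ∑ j ∈ s.erase n, 1 / (c / 2 * dist j n) ^ 2 :=
        add_le_add hnear (Finset.sum_le_sum hterm)
    _ = 1 / b ^ 2 + 4 / c ^ 2 * ∑ j ∈ s.erase n, 1 / dist j n ^ 2 := by
        rw [Finset.mul_sum]
        congr! 2 with j
        ring
    _ ≤ 1 / b ^ 2 + 4 / c ^ 2 * (π ^ 2 / 3) := by
        gcongr
        exact sum_one_div_natDist_sq_le _ n
    _ = 1 / b ^ 2 + 4 * π ^ 2 / (3 * c ^ 2) := by ring

theorem stmt15_general {x : ℕ → E} {w : ℕ → ℝ} (hb : 0 < b) (hc : 0 < c) (hw : ∀ j, 0 < w j)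
    (hsep : ∀ j n : ℕ, c * max (w j) (w n) * |(j : ℝ) - n| ≤ dist (x j) (x n))
    (hgap : ∀ j, b * w j ≤ dist t (x j)) :
    Summable (fun j => w j ^ 2 / dist t (x j) ^ 2) ∧
      ∑' j, w j ^ 2 / dist t (x j) ^ 2 ≤ 1 / b ^ 2 + 4 * π ^ 2 / (3 * c ^ 2) := by
  have hsep' (j n : ℕ) : c * w j * dist j n ≤ dist (x j) (x n) := by
    refine le_trans ?_ (hsep j n)
    rw [Nat.dist_eq]
    gcongr
    exact le_max_left _ _
  have hsum := sum_sq_div_dist_sq_le hb hc (fun j => (hw j).le) hsep' hgap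
  have hnonneg (j : ℕ) : 0 ≤ w j ^ 2 / dist t (x j) ^ 2 := by positivity
  exact ⟨summable_of_sum_le hnonneg hsum, Real.tsum_le_of_sum_le hnonneg hsum⟩

end SeparatedPoints

/-- Let `p ∈ [0,1)`, `b₁ > 0`, `c > 0`, and let `(r_j)` be an increasing
sequence of positive reals with `|r_j − r_n| ≥ c·max(r_j^p, r_n^p)·|j − n|` for all `j, n`.
Then there is a constant `C > 0`, depending only on `b₁` and `c`, such that for every `t > 0`
with `|t − r_j| ≥ b₁ r_j^p` for all `j`, the series `Σ_j r_j^{2p}/(t − r_j)²` converges and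
its sum is at most `C`. -/
theorem stmt15 (b₁ c : ℝ) (hb₁ : 0 < b₁) (hc : 0 < c) :
    ∃ C : ℝ, 0 < C ∧
      ∀ p : ℝ, p ∈ Set.Ico (0 : ℝ) 1 →
      ∀ r : ℕ → ℝ, (∀ j, 0 < r j) → StrictMono r →
        (∀ j n : ℕ, c * max (r j ^ p) (r n ^ p) * |(j : ℝ) - (n : ℝ)| ≤ |r j - r n|) →
        ∀ t : ℝ, 0 < t → (∀ j, b₁ * r j ^ p ≤ |t - r j|) →
          Summable (fun j : ℕ => r j ^ (2 * p) / (t - r j) ^ 2) ∧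
          (∑' j : ℕ, r j ^ (2 * p) / (t - r j) ^ 2) ≤ C := by
  refine ⟨1 / b₁ ^ 2 + 4 * Real.pi ^ 2 / (3 * c ^ 2), by positivity,
    fun p _ r hr _ hsep t _ hgap => ?_⟩
  have hpow (j : ℕ) : r j ^ (2 * p) = (r j ^ p) ^ 2 := by
    rw [mul_comm, Real.rpow_mul (hr j).le, Real.rpow_two]
  simpa only [Real.dist_eq, sq_abs, hpow] using
    stmt15_general (x := r) (t := t) hb₁ hc (fun j => Real.rpow_pos_of_pos (hr j) p) hsep hgap
end

section
/- Let p ∈ [0,1), b₁ > 0, c > 0, a > 0, and let (r_j)_{j≥1} be an increasing sequence of positive real numbers satisfying |r_j − r_n| ≥ c · max(r_j^p, r_n^p) · |j − n| for all j, n ≥ 1, and r_j^{1−p} ≥ a·j for all j ≥ 1. Then there exists a constant C > 0, depending only on b₁, c and a, such that for every t > 0 with |t − r_j| ≥ b₁ r_j^p for all j, one has Σ_{j=1}^∞ t² r_j^{2p−2}/(t − r_j)² ≤ C. -/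
/-!
By partial fractions `t / (r_j (t - r_j)) = 1 / r_j + 1 / (t - r_j)`, so it suffices to bound
`∑ (r_j ^ p / |x - r_j|) ^ 2` for the two points `x = 0` and `x = t`, each at distance at least a
multiple of `r_j ^ p` from every `r_j`. If `r_N` is the term nearest to `x`, then
`|r_j - r_N| ≤ 2 |x - r_j|`, so the separation of the sequence makes `|x - r_j|` at least a multiple
of `r_j ^ p (1 + |j - N|)`, and the sum is controlled by `∑ (1 + |k|)⁻²` over the integers.
-/

open Filter Bornology Metric

/-- The sum of `(1 + |k|)⁻²` over all integers `k`. The index set is `ℤ`, so that it dominates the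
same sum over any translate `{j - N | j : ℕ}`, uniformly in `N`. -/
noncomputable def intInvSqSum : ℝ := ∑' k : ℤ, ((1 + |(k : ℝ)|) ^ 2)⁻¹

lemma summable_int_inv_one_add_abs_sq : Summable fun k : ℤ => ((1 + |(k : ℝ)|) ^ 2)⁻¹ := by
  have summable_nat : Summable fun n : ℕ => ((1 + (n : ℝ)) ^ 2)⁻¹ := by
    simpa [add_comm] using
      (summable_nat_add_iff 1).mpr (Real.summable_nat_pow_inv (p := 2) |>.mpr one_lt_two)
  exact .of_nat_of_neg (by simpa using summable_nat) (by simpa using summable_nat)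

lemma intInvSqSum_pos : 0 < intInvSqSum :=
  summable_int_inv_one_add_abs_sq.tsum_pos (fun _ => by positivity) 0 (by simp)

lemma summable_sq_and_tsum_sq_le {ι : Type*} {f : ι → ℝ} {e : ι → ℤ} {K : ℝ}
    (he : Function.Injective e) (hf : ∀ i, |f i| ≤ K / (1 + |(e i : ℝ)|)) :
    Summable (fun i => f i ^ 2) ∧ ∑' i, f i ^ 2 ≤ K ^ 2 * intInvSqSum := by
  have sq_le (i : ι) : f i ^ 2 ≤ K ^ 2 * ((1 + |(e i : ℝ)|) ^ 2)⁻¹ := by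
    rw [← div_eq_mul_inv, ← div_pow, ← sq_abs]
    gcongr
    exact hf i
  have summable_comp := summable_int_inv_one_add_abs_sq.comp_injective he
  have summable_bound := summable_comp.mul_left (K ^ 2)
  have summable_sq := Summable.of_nonneg_of_le (fun i => sq_nonneg (f i)) sq_le summable_bound
  refine ⟨summable_sq, ?_⟩
  calc ∑' i, f i ^ 2
      ≤ ∑' i, K ^ 2 * ((1 + |(e i : ℝ)|) ^ 2)⁻¹ := summable_sq.tsum_le_tsum sq_le summable_bound
    _ = K ^ 2 * ∑' i, ((1 + |(e i : ℝ)|) ^ 2)⁻¹ := tsum_mul_left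
    _ ≤ K ^ 2 * intInvSqSum := by
      gcongr
      exact tsum_comp_le_tsum_of_inj summable_int_inv_one_add_abs_sq (fun _ => by positivity) he

section MetricSpace

variable {X : Type*} [PseudoMetricSpace X]

lemma exists_forall_dist_le_of_tendsto_cobounded {ι : Type*} [Nonempty ι] {r : ι → X}
    (hr : Tendsto r cofinite (cobounded X)) (x : X) : ∃ i₀, ∀ i, dist x (r i₀) ≤ dist x (r i) :=
  ((tendsto_dist_left_cobounded_atTop x).comp hr).exists_forall_le

lemma tendsto_cobounded_of_mul_le_dist {r : ℕ → X} {x : X} {δ : ℝ} (hδ : 0 < δ)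
    (hr : ∀ j : ℕ, δ * j ≤ dist (r j) x) : Tendsto r atTop (cobounded X) :=
  (tendsto_dist_right_atTop_iff x).mp <|
    tendsto_atTop_mono hr (tendsto_natCast_atTop_atTop.const_mul_atTop hδ)

variable {r : ℕ → X} {w : ℕ → ℝ} {b c : ℝ} {x : X}

lemma exists_forall_dist_le_of_separated (hc : 0 < c) (hw : 0 < w 0)
    (hsep : ∀ j n : ℕ, c * w j * |(j : ℝ) - n| ≤ dist (r j) (r n)) :
    ∃ N, ∀ j, dist x (r N) ≤ dist x (r j) := by
  have tendsto_r : Tendsto r atTop (cobounded X) :=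
    tendsto_cobounded_of_mul_le_dist (x := r 0) (mul_pos hc hw) fun j => by
      simpa [dist_comm] using hsep 0 j
  rw [← Nat.cofinite_eq_atTop] at tendsto_r
  exact exists_forall_dist_le_of_tendsto_cobounded tendsto_r x

lemma mul_one_add_abs_sub_le_mul_dist {N : ℕ} (hb : 0 < b) (hc : 0 < c)
    (hsep : ∀ j : ℕ, c * w j * |(j : ℝ) - N| ≤ dist (r j) (r N))
    (hdist : ∀ j, b * w j ≤ dist x (r j)) (hN : ∀ j, dist x (r N) ≤ dist x (r j)) (j : ℕ) :
    w j * (1 + |(j : ℝ) - N|) ≤ (1 / b + 2 / c) * dist x (r j) := by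
  have dist_le : dist (r j) (r N) ≤ 2 * dist x (r j) := by
    linarith [dist_triangle_left (r j) (r N) x, hN j]
  have near : w j ≤ dist x (r j) / b := (le_div_iff₀' hb).mpr (hdist j)
  have far : w j * |(j : ℝ) - N| ≤ 2 * dist x (r j) / c := by
    rw [le_div_iff₀' hc, ← mul_assoc]
    exact (hsep j).trans dist_le
  calc w j * (1 + |(j : ℝ) - N|) = w j + w j * |(j : ℝ) - N| := by ring
    _ ≤ dist x (r j) / b + 2 * dist x (r j) / c := add_le_add near far
    _ = (1 / b + 2 / c) * dist x (r j) := by ring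

theorem summable_and_tsum_sq_div_dist_le (hb : 0 < b) (hc : 0 < c) (hw : ∀ j, 0 < w j)
    (hsep : ∀ j n : ℕ, c * w j * |(j : ℝ) - n| ≤ dist (r j) (r n))
    (hdist : ∀ j, b * w j ≤ dist x (r j)) :
    Summable (fun j => (w j / dist x (r j)) ^ 2) ∧
      ∑' j, (w j / dist x (r j)) ^ 2 ≤ (1 / b + 2 / c) ^ 2 * intInvSqSum := by
  obtain ⟨N, hN⟩ := exists_forall_dist_le_of_separated (x := x) hc (hw 0) hsep
  have injective_sub : Function.Injective fun j : ℕ => (j : ℤ) - N := fun i j h => by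
    simpa using h
  refine summable_sq_and_tsum_sq_le injective_sub fun j => ?_
  have dist_x_pos : 0 < dist x (r j) := (mul_pos hb (hw j)).trans_le (hdist j)
  rw [abs_of_pos (div_pos (hw j) dist_x_pos), div_le_div_iff₀ dist_x_pos (by positivity)]
  push_cast
  exact mul_one_add_abs_sub_le_mul_dist hb hc (hsep · N) hdist hN j

end MetricSpace

lemma sq_mul_rpow_div_sq_le {p r t : ℝ} (hr : 0 < r) (htr : t ≠ r) :
    t ^ 2 * r ^ (2 * p - 2) / (t - r) ^ 2 ≤
      2 * ((r ^ p / dist 0 r) ^ 2 + (r ^ p / dist t r) ^ 2) := by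
  have sub_ne : t - r ≠ 0 := sub_ne_zero.mpr htr
  have rpow_eq : r ^ (2 * p - 2) = (r ^ p / r) ^ 2 := by
    rw [← Real.rpow_sub_one hr.ne', ← Real.rpow_mul_natCast hr.le]
    congr 1
    push_cast
    ring
  calc t ^ 2 * r ^ (2 * p - 2) / (t - r) ^ 2
      = (r ^ p / r + r ^ p / (t - r)) ^ 2 := by
        rw [rpow_eq]
        field_simp
        ring
    _ ≤ 2 * ((r ^ p / r) ^ 2 + (r ^ p / (t - r)) ^ 2) := add_sq_le
    _ = 2 * ((r ^ p / dist 0 r) ^ 2 + (r ^ p / dist t r) ^ 2) := by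
        simp only [Real.dist_eq, div_pow, sq_abs, zero_sub, neg_sq]

theorem stmt16_general (b₁ c a : ℝ) (hb₁ : 0 < b₁) (hc : 0 < c) (ha : 0 < a) :
    ∃ C : ℝ, 0 < C ∧
      ∀ p : ℝ, ∀ r : ℕ → ℝ, (∀ j, 0 < r j) →
        (∀ j n : ℕ, c * max (r j ^ p) (r n ^ p) * |(j : ℝ) - (n : ℝ)| ≤ |r j - r n|) →
        (∀ j : ℕ, a ≤ r j ^ (1 - p)) →
        ∀ t : ℝ, (∀ j, b₁ * r j ^ p ≤ |t - r j|) →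
          Summable (fun j : ℕ => t ^ 2 * r j ^ (2 * p - 2) / (t - r j) ^ 2) ∧
          (∑' j : ℕ, t ^ 2 * r j ^ (2 * p - 2) / (t - r j) ^ 2) ≤ C := by
  refine ⟨2 * ((1 / a + 2 / c) ^ 2 * intInvSqSum + (1 / b₁ + 2 / c) ^ 2 * intInvSqSum),
    by have := intInvSqSum_pos; positivity, fun p r hr hsep hgrow t hdist => ?_⟩
  have rpow_pos (j : ℕ) : 0 < r j ^ p := Real.rpow_pos_of_pos (hr j) p
  have separated (j n : ℕ) : c * r j ^ p * |(j : ℝ) - n| ≤ dist (r j) (r n) :=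
    le_trans (by gcongr; exact le_max_left _ _) (hsep j n)
  have dist_zero (j : ℕ) : a * r j ^ p ≤ dist 0 (r j) := by
    rw [dist_zero_left, Real.norm_of_nonneg (hr j).le, ← le_div_iff₀ (rpow_pos j)]
    simpa only [Real.rpow_sub (hr j), Real.rpow_one] using hgrow j
  have ne_r (j : ℕ) : t ≠ r j :=
    dist_pos.mp ((mul_pos hb₁ (rpow_pos j)).trans_le (hdist j))
  obtain ⟨summable₀, tsum₀⟩ := summable_and_tsum_sq_div_dist_le ha hc rpow_pos separated dist_zero
  obtain ⟨summableₜ, tsumₜ⟩ := summable_and_tsum_sq_div_dist_le hb₁ hc rpow_pos separated hdist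
  have summable_bound := (summable₀.add summableₜ).mul_left 2
  have term_le (j : ℕ) := sq_mul_rpow_div_sq_le (p := p) (hr j) (ne_r j)
  have summable_term : Summable fun j => t ^ 2 * r j ^ (2 * p - 2) / (t - r j) ^ 2 :=
    .of_nonneg_of_le (fun j => by have := hr j; positivity) term_le summable_bound
  refine ⟨summable_term, (summable_term.tsum_le_tsum term_le summable_bound).trans ?_⟩
  rw [tsum_mul_left, summable₀.tsum_add summableₜ]
  gcongr

/-- Let `p ∈ [0,1)`, `b₁, c, a > 0`, and let `(r_j)_{j≥1}` be an increasing
sequence of positive reals with `|r_j − r_n| ≥ c·max(r_j^p, r_n^p)·|j − n|` and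
`r_j^{1−p} ≥ a·j` (here indexed from `0`, so `r_j^{1−p} ≥ a(j+1)`).  Then there is a constant
`C > 0`, depending only on `b₁`, `c` and `a`, such that for every `t > 0` with
`|t − r_j| ≥ b₁ r_j^p` for all `j`, one has `Σ_j t² r_j^{2p−2}/(t − r_j)² ≤ C`. -/
theorem stmt16 (b₁ c a : ℝ) (hb₁ : 0 < b₁) (hc : 0 < c) (ha : 0 < a) :
    ∃ C : ℝ, 0 < C ∧
      ∀ p : ℝ, p ∈ Set.Ico (0 : ℝ) 1 →
      ∀ r : ℕ → ℝ, (∀ j, 0 < r j) → StrictMono r →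
        (∀ j n : ℕ, c * max (r j ^ p) (r n ^ p) * |(j : ℝ) - (n : ℝ)| ≤ |r j - r n|) →
        (∀ j : ℕ, a * ((j : ℝ) + 1) ≤ r j ^ (1 - p)) →
        ∀ t : ℝ, 0 < t → (∀ j, b₁ * r j ^ p ≤ |t - r j|) →
          Summable (fun j : ℕ => t ^ 2 * r j ^ (2 * p - 2) / (t - r j) ^ 2) ∧
          (∑' j : ℕ, t ^ 2 * r j ^ (2 * p - 2) / (t - r j) ^ 2) ≤ C := by
  obtain ⟨C, hC, bound⟩ := stmt16_general b₁ c a hb₁ hc ha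
  exact ⟨C, hC, fun p _ r hr _ hsep hgrow t _ => bound p r hr hsep
    (fun j => (le_mul_of_one_le_right ha.le (by simp)).trans (hgrow j)) t⟩
end

section
/- Let T be a self-adjoint operator in a complex Hilbert space H with domain D(T) whose spectrum is contained in the union of pairwise disjoint intervals Δ_k = [α_{2k−1}, α_{2k}], k ∈ ℤ, whose gaps satisfy α_{2k+1} − α_{2k} ≥ 2^{1−p}·b₁·|α_{2k+1} + α_{2k}|^p for some b₁ > 0 and p ∈ [0,1). Let B be a linear operator defined on D(T) that is p-subordinate to T with subordination bound b', and assume b₁ > b'. Then for every δ ∈ (0, b₁ − b') there exist N ∈ ℕ and C > 0 such that for every k with |k| ≥ N, every λ in the vertical strip Ω_k = {λ ∈ ℂ : |Re λ − r_k| ≤ δ|r_k|^p}, where r_k = (α_{2k} + α_{2k+1})/2, belongs to the resolvent set of A = T + B, and ‖(A − λ)^{−1}‖ ≤ C·|r_k|^{−p} for all λ ∈ Ω_k. -/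
noncomputable section

variable {H : Type*} [NormedAddCommGroup H] [InnerProductSpace ℂ H] [CompleteSpace H]

/-- `R` is a two-sided bounded inverse of `T - z` (so `z` is in the resolvent set of `T`). -/
def IsResolventOf (T : H →ₗ.[ℂ] H) (z : ℂ) (R : H →L[ℂ] H) : Prop :=
  (∀ x : T.domain, R (T x - z • (x : H)) = (x : H)) ∧
  (∀ y : H, ∃ hy : R y ∈ T.domain, T ⟨R y, hy⟩ - z • (R y) = y)

/-- The resolvent set of the (in general unbounded) operator `T`. -/
def pmResolventSet (T : H →ₗ.[ℂ] H) : Set ℂ := {z | ∃ R, IsResolventOf T z R}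

/-- The spectrum of the (in general unbounded) operator `T`. -/
def pmSpectrum (T : H →ₗ.[ℂ] H) : Set ℂ := (pmResolventSet T)ᶜ

/-- The set of constants `b` for which `B` is `p`-subordinate to `T` with some admissible
constant `M ≥ 0` (with `M = 0` required when `p = 0`); the subordination bound `b'` is the
infimum of this set. -/
def SubordSet (T B : H →ₗ.[ℂ] H) (hle : T.domain ≤ B.domain) (p : ℝ) : Set ℝ :=
  {b | 0 < b ∧ ∃ M : ℝ, 0 ≤ M ∧ (p = 0 → M = 0) ∧
    ∀ x : T.domain, ‖B ⟨(x : H), hle x.2⟩‖ ≤ b * ‖T x‖ ^ p * ‖(x : H)‖ ^ (1 - p) + M * ‖(x : H)‖}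

/-- The operator sum `A = T + B` defined on the domain of `T`. -/
def pmSum (T B : H →ₗ.[ℂ] H) (hle : T.domain ≤ B.domain) : H →ₗ.[ℂ] H :=
  ⟨T.domain, T.toFun + B.toFun.comp (Submodule.inclusion hle)⟩

/-!
Fix admissible subordination constants `b < b₁ - δ` and `M`. For `z` in the strip `Ω_k`, the
vertical strip of half-width `d = (b₁ - δ) |r_k| ^ p` centred at `Re z` is free of spectrum of `T`.
The resolvent of a symmetric operator at a real point is self-adjoint, so its norm is its spectral
radius; this gives `d ‖x‖ ≤ ‖(T - Re z) x‖`, and the right-hand side is at most `‖(T - z) x‖`. With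
`u = ‖(T - z) x‖ / d` we get `‖x‖ ≤ u` and `‖T x‖ ≤ (d + |Re z|) u ≤ (|r_k| + b₁ |r_k| ^ p) u`, so
subordination bounds `‖B x‖` by `(b (|r_k| + b₁ |r_k| ^ p) ^ p + M) / d * ‖(T - z) x‖`. As
`|r_k| → ∞` this factor tends to `b / (b₁ - δ) < 1`, and the Neumann series inverts
`T + B - z = (1 + B (T - z)⁻¹) (T - z)`.
-/

open Filter Topology

variable {E : Type*} [NormedAddCommGroup E] [InnerProductSpace ℂ E]

theorem isFormalAdjoint_self_of_isSelfAdjoint {T : H →ₗ.[ℂ] H} (hT : IsSelfAdjoint T) :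
    T.IsFormalAdjoint T := by
  simpa only [LinearPMap.isSelfAdjoint_def.mp hT] using
    LinearPMap.adjoint_isFormalAdjoint hT.dense_domain

section Symmetric

variable {T : E →ₗ.[ℂ] E}

theorem norm_sub_smul_sq (hT : T.IsFormalAdjoint T) (z : ℂ) (x : T.domain) :
    ‖T x - z • (x : E)‖ ^ 2 =
      ‖T x - (z.re : ℂ) • (x : E)‖ ^ 2 + z.im ^ 2 * ‖(x : E)‖ ^ 2 := by
  set w := T x - (z.re : ℂ) • (x : E) with hw
  have him : (inner ℂ w (x : E)).im = 0 := by
    rw [← Complex.conj_eq_iff_im, inner_conj_symm, hw, inner_sub_left, inner_sub_right, hT x x,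
      inner_smul_left, inner_smul_right, Complex.conj_ofReal]
  have hcross : RCLike.re (inner ℂ w ((z.im * Complex.I) • (x : E))) = 0 := by
    simp [him]
  have hsplit : T x - z • (x : E) = w - (z.im * Complex.I) • (x : E) := by
    rw [hw, sub_sub, ← add_smul, Complex.re_add_im]
  rw [hsplit, @norm_sub_sq ℂ, hcross, norm_smul]
  simp [mul_pow]

theorem norm_sub_re_smul_le (hT : T.IsFormalAdjoint T) (z : ℂ) (x : T.domain) :
    ‖T x - (z.re : ℂ) • (x : E)‖ ≤ ‖T x - z • (x : E)‖ := by
  refine le_of_sq_le_sq ?_ (norm_nonneg _)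
  rw [norm_sub_smul_sq hT z x]
  exact le_add_of_nonneg_right (by positivity)

theorem norm_apply_le_norm_sub_smul_add (hT : T.IsFormalAdjoint T) (z : ℂ) (x : T.domain) :
    ‖T x‖ ≤ ‖T x - z • (x : E)‖ + |z.re| * ‖(x : E)‖ :=
  calc ‖T x‖ ≤ ‖T x - (z.re : ℂ) • (x : E)‖ + ‖(z.re : ℂ) • (x : E)‖ :=
        norm_le_norm_sub_add _ _
    _ = ‖T x - (z.re : ℂ) • (x : E)‖ + |z.re| * ‖(x : E)‖ := by
      rw [norm_smul, Complex.norm_real, Real.norm_eq_abs]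
    _ ≤ ‖T x - z • (x : E)‖ + |z.re| * ‖(x : E)‖ := by
      gcongr
      exact norm_sub_re_smul_le hT z x

end Symmetric

section Sum

variable {T B : E →ₗ.[ℂ] E} (hle : T.domain ≤ B.domain)

theorem pmSum_apply (x : T.domain) : pmSum T B hle x = T x + B ⟨(x : E), hle x.2⟩ :=
  rfl

theorem mul_norm_le_norm_pmSum_sub_smul {z : ℂ} {q : ℝ} {x : T.domain}
    (hB : ‖B ⟨(x : E), hle x.2⟩‖ ≤ q * ‖T x - z • (x : E)‖) :
    (1 - q) * ‖T x - z • (x : E)‖ ≤ ‖pmSum T B hle x - z • (x : E)‖ := by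
  have hsum : T x - z • (x : E) = (pmSum T B hle x - z • (x : E)) - B ⟨(x : E), hle x.2⟩ := by
    rw [pmSum_apply]
    abel
  have htri := norm_sub_le (pmSum T B hle x - z • (x : E)) (B ⟨(x : E), hle x.2⟩)
  rw [← hsum] at htri
  linarith

end Sum

namespace IsResolventOf

section

variable {T : E →ₗ.[ℂ] E} {z w : ℂ} {R S : E →L[ℂ] E}

theorem norm_le_norm_mul (hR : IsResolventOf T z R) (x : T.domain) :
    ‖(x : E)‖ ≤ ‖R‖ * ‖T x - z • (x : E)‖ := by
  simpa only [hR.1 x] using R.le_opNorm (T x - z • (x : E))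

theorem norm_le_inv (hR : IsResolventOf T z R) {m : ℝ} (hm : 0 < m)
    (hT : ∀ x : T.domain, m * ‖(x : E)‖ ≤ ‖T x - z • (x : E)‖) : ‖R‖ ≤ m⁻¹ := by
  refine R.opNorm_le_bound (by positivity) fun y => ?_
  obtain ⟨hy, hRy⟩ := hR.2 y
  rw [inv_mul_eq_div, le_div_iff₀' hm]
  simpa only [hRy] using hT ⟨R y, hy⟩

theorem sub_eq_smul_mul (hR : IsResolventOf T z R) (hS : IsResolventOf T w S) :
    R - S = (z - w) • (R * S) := by
  ext y
  obtain ⟨hy, hSy⟩ := hS.2 y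
  have hy_eq : y = (T ⟨S y, hy⟩ - z • S y) + (z - w) • S y := by
    rw [sub_smul, sub_add_sub_cancel, hSy]
  have hRy : R y = S y + (z - w) • R (S y) := by
    conv_lhs => rw [hy_eq, map_add, map_smul, hR.1 ⟨S y, hy⟩]
  exact sub_eq_of_eq_add' hRy

theorem notMem_spectrum (hR : IsResolventOf T z R) {μ : ℂ} (hμ : μ ≠ 0)
    (hz : z + μ⁻¹ ∈ pmResolventSet T) : μ ∉ spectrum ℂ R := by
  obtain ⟨S, hS⟩ := hz
  have hRS : R - S = -μ⁻¹ • (R * S) := by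
    simpa only [sub_add_cancel_left] using hR.sub_eq_smul_mul hS
  have hSR : S - R = μ⁻¹ • (S * R) := by
    simpa only [add_sub_cancel_left] using hS.sub_eq_smul_mul hR
  rw [spectrum.notMem_iff, Algebra.algebraMap_eq_smul_one, isUnit_iff_exists]
  refine ⟨μ⁻¹ • (1 + μ⁻¹ • S), ?_, ?_⟩
  · calc (μ • 1 - R) * (μ⁻¹ • (1 + μ⁻¹ • S))
        = (μ * μ⁻¹) • (1 + μ⁻¹ • S) - μ⁻¹ • (R - -μ⁻¹ • (R * S)) := by
          simp only [sub_mul, mul_add, smul_mul_assoc, mul_smul_comm, one_mul, mul_one]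
          module
      _ = 1 := by rw [mul_inv_cancel₀ hμ, ← hRS]; module
  · calc (μ⁻¹ • (1 + μ⁻¹ • S)) * (μ • 1 - R)
        = (μ * μ⁻¹) • (1 + μ⁻¹ • S) - μ⁻¹ • (R + μ⁻¹ • (S * R)) := by
          simp only [mul_sub, add_mul, smul_mul_assoc, mul_smul_comm, one_mul, mul_one]
          module
      _ = 1 := by rw [mul_inv_cancel₀ hμ, ← hSR]; module

theorem isSymmetric_of_real {c : ℝ} (hR : IsResolventOf T (c : ℂ) R)
    (hT : T.IsFormalAdjoint T) : (R : E →ₗ[ℂ] E).IsSymmetric := by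
  intro u v
  obtain ⟨hu, hRu⟩ := hR.2 u
  obtain ⟨hv, hRv⟩ := hR.2 v
  have hTR : inner ℂ (T ⟨R u, hu⟩) (R v) = inner ℂ (R u) (T ⟨R v, hv⟩) := hT ⟨R u, hu⟩ ⟨R v, hv⟩
  calc inner ℂ (R u) v = inner ℂ (R u) (T ⟨R v, hv⟩ - (c : ℂ) • R v) := by rw [hRv]
    _ = inner ℂ (T ⟨R u, hu⟩ - (c : ℂ) • R u) (R v) := by
      rw [inner_sub_left, inner_sub_right, hTR, inner_smul_left, inner_smul_right,
        Complex.conj_ofReal]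
    _ = inner ℂ u (R v) := by rw [hRu]

theorem pmSum_mul_inv {B : E →ₗ.[ℂ] E} (hR : IsResolventOf T z R) (hle : T.domain ≤ B.domain)
    {U : (E →L[ℂ] E)ˣ} (hU : ∀ x : T.domain,
      (U : E →L[ℂ] E) (T x - z • (x : E)) = pmSum T B hle x - z • (x : E)) :
    IsResolventOf (pmSum T B hle) z (R * (↑U⁻¹ : E →L[ℂ] E)) := by
  have hU_inv (y : E) : (U : E →L[ℂ] E) ((↑U⁻¹ : E →L[ℂ] E) y) = y :=
    congrArg (fun L : E →L[ℂ] E => L y) U.mul_inv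
  have hinv_U (y : E) : (↑U⁻¹ : E →L[ℂ] E) ((U : E →L[ℂ] E) y) = y :=
    congrArg (fun L : E →L[ℂ] E => L y) U.inv_mul
  constructor
  · intro (x : T.domain)
    calc R ((↑U⁻¹ : E →L[ℂ] E) (pmSum T B hle x - z • (x : E)))
        = R (T x - z • (x : E)) := by rw [← hU, hinv_U]
      _ = x := hR.1 x
  · intro y
    obtain ⟨hy, hRy⟩ := hR.2 ((↑U⁻¹ : E →L[ℂ] E) y)
    exact ⟨hy, (hU ⟨_, hy⟩).symm.trans (by rw [hRy, hU_inv])⟩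

end

theorem norm_le_inv_of_ball_subset {T : H →ₗ.[ℂ] H} {c d : ℝ} {R : H →L[ℂ] H}
    (hR : IsResolventOf T (c : ℂ) R) (hT : T.IsFormalAdjoint T) (hd : 0 < d)
    (hball : Metric.ball (c : ℂ) d ⊆ pmResolventSet T) : ‖R‖ ≤ d⁻¹ := by
  have hself : IsSelfAdjoint R :=
    ContinuousLinearMap.isSelfAdjoint_iff_isSymmetric.mpr (hR.isSymmetric_of_real hT)
  have hspectrum : ∀ μ ∈ spectrum ℂ R, ‖μ‖ ≤ d⁻¹ := by
    intro μ hμ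
    by_contra! hlt
    have hμ0 : μ ≠ 0 := norm_pos_iff.mp ((inv_pos.mpr hd).trans hlt)
    refine hR.notMem_spectrum hμ0 (hball ?_) hμ
    rw [mem_ball_iff_norm, add_sub_cancel_left, norm_inv]
    exact inv_lt_of_inv_lt₀ hd hlt
  have hradius : spectralRadius ℂ R ≤ ENNReal.ofReal d⁻¹ :=
    iSup₂_le fun μ hμ => by
      rw [← enorm_eq_nnnorm, ← ofReal_norm]
      exact ENNReal.ofReal_le_ofReal (hspectrum μ hμ)
  rw [R.spectralRadius_eq_nnnorm hself, ← enorm_eq_nnnorm, ← ofReal_norm] at hradius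
  exact (ENNReal.ofReal_le_ofReal_iff (by positivity)).mp hradius

theorem exists_pmSum {T B : H →ₗ.[ℂ] H} {z : ℂ} {R : H →L[ℂ] H} (hR : IsResolventOf T z R)
    (hle : T.domain ≤ B.domain) {q : ℝ} (hq0 : 0 ≤ q) (hq1 : q < 1)
    (hB : ∀ x : T.domain, ‖B ⟨(x : H), hle x.2⟩‖ ≤ q * ‖T x - z • (x : H)‖) :
    ∃ S : H →L[ℂ] H, IsResolventOf (pmSum T B hle) z S := by
  have hmem (y : H) : R y ∈ T.domain := (hR.2 y).1
  let BR : H →ₗ[ℂ] H := B.toFun ∘ₗ Submodule.inclusion hle ∘ₗ R.toLinearMap.codRestrict _ hmem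
  have hBR (y : H) : ‖BR y‖ ≤ q * ‖y‖ := by
    obtain ⟨hy, hRy⟩ := hR.2 y
    exact (hB ⟨R y, hy⟩).trans_eq (by rw [hRy])
  let K : H →L[ℂ] H := BR.mkContinuous q hBR
  have hK : ‖-K‖ < 1 := by
    rw [norm_neg]
    exact (BR.mkContinuous_norm_le hq0 hBR).trans_lt hq1
  have hK_apply (x : T.domain) : K (T x - z • (x : H)) = B ⟨(x : H), hle x.2⟩ :=
    congrArg B (Subtype.ext (hR.1 x))
  refine ⟨_, hR.pmSum_mul_inv hle (U := Units.oneSub (-K) hK) fun x => ?_⟩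
  rw [Units.val_oneSub, sub_neg_eq_add, pmSum_apply, ← hK_apply x, add_sub_right_comm]
  rfl

end IsResolventOf

theorem mul_norm_le_norm_sub_smul_of_strip {T : H →ₗ.[ℂ] H} (hT : T.IsFormalAdjoint T) {z : ℂ}
    {d : ℝ} (hd : 0 < d) (hstrip : ∀ w : ℂ, |w.re - z.re| < d → w ∈ pmResolventSet T)
    (x : T.domain) : d * ‖(x : H)‖ ≤ ‖T x - z • (x : H)‖ := by
  obtain ⟨R, hR⟩ := hstrip (z.re : ℂ) (by simpa using hd)
  have hball : Metric.ball (z.re : ℂ) d ⊆ pmResolventSet T := fun w hw =>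
    hstrip w ((Complex.abs_re_le_norm (w - z.re)).trans_lt (mem_ball_iff_norm.mp hw))
  have hRd : ‖R‖ ≤ d⁻¹ := hR.norm_le_inv_of_ball_subset hT hd hball
  calc d * ‖(x : H)‖ ≤ d * (d⁻¹ * ‖T x - (z.re : ℂ) • (x : H)‖) := by
        gcongr
        exact (hR.norm_le_norm_mul x).trans (by gcongr)
    _ = ‖T x - (z.re : ℂ) • (x : H)‖ := mul_inv_cancel_left₀ hd.ne' _
    _ ≤ ‖T x - z • (x : H)‖ := norm_sub_re_smul_le hT z x

/-- `B` is `p`-subordinate to `T` with constants `b` and `M`. The sign conditions on `b` and `M`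
are left to the statements that need them. -/
def IsSubordinate (T B : E →ₗ.[ℂ] E) (hle : T.domain ≤ B.domain) (p b M : ℝ) : Prop :=
  ∀ x : T.domain, ‖B ⟨(x : E), hle x.2⟩‖ ≤ b * ‖T x‖ ^ p * ‖(x : E)‖ ^ (1 - p) + M * ‖(x : E)‖

theorem mul_rpow_mul_rpow_one_sub_le {p a c D u : ℝ} (hp0 : 0 ≤ p) (hp1 : p ≤ 1) (ha : 0 ≤ a)
    (hc : 0 ≤ c) (hD : 0 ≤ D) (haD : a ≤ D * u) (hcu : c ≤ u) :
    a ^ p * c ^ (1 - p) ≤ D ^ p * u := by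
  have hu : 0 ≤ u := hc.trans hcu
  have hp1' : 0 ≤ 1 - p := sub_nonneg.mpr hp1
  calc a ^ p * c ^ (1 - p) ≤ (D * u) ^ p * u ^ (1 - p) := by gcongr
    _ = D ^ p * (u ^ p * u ^ (1 - p)) := by rw [Real.mul_rpow hD hu, mul_assoc]
    _ = D ^ p * u := by
      rw [← Real.rpow_add_of_nonneg hu hp0 hp1', add_sub_cancel, Real.rpow_one]

theorem IsSubordinate.norm_apply_le {T B : E →ₗ.[ℂ] E} {hle : T.domain ≤ B.domain}
    {p b M : ℝ} (hB : IsSubordinate T B hle p b M) (hT : T.IsFormalAdjoint T) (hp0 : 0 ≤ p)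
    (hp1 : p ≤ 1) (hb : 0 ≤ b) (hM : 0 ≤ M) {z : ℂ} {d : ℝ} (hd : 0 < d) {x : T.domain}
    (hx : d * ‖(x : E)‖ ≤ ‖T x - z • (x : E)‖) :
    ‖B ⟨(x : E), hle x.2⟩‖ ≤ (b * (d + |z.re|) ^ p + M) / d * ‖T x - z • (x : E)‖ := by
  set u := ‖T x - z • (x : E)‖ / d with hu
  have hdu : ‖T x - z • (x : E)‖ = d * u := by rw [hu, mul_div_cancel₀ _ hd.ne']
  have hxu : ‖(x : E)‖ ≤ u := (le_div_iff₀' hd).mpr hx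
  have hTu : ‖T x‖ ≤ (d + |z.re|) * u :=
    calc ‖T x‖ ≤ ‖T x - z • (x : E)‖ + |z.re| * ‖(x : E)‖ :=
          norm_apply_le_norm_sub_smul_add hT z x
      _ ≤ d * u + |z.re| * u := by rw [hdu]; gcongr
      _ = (d + |z.re|) * u := (add_mul _ _ _).symm
  have hpow : ‖T x‖ ^ p * ‖(x : E)‖ ^ (1 - p) ≤ (d + |z.re|) ^ p * u :=
    mul_rpow_mul_rpow_one_sub_le hp0 hp1 (norm_nonneg _) (norm_nonneg _) (by positivity) hTu hxu
  calc ‖B ⟨(x : E), hle x.2⟩‖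
      ≤ b * (‖T x‖ ^ p * ‖(x : E)‖ ^ (1 - p)) + M * ‖(x : E)‖ := by
        simpa only [mul_assoc] using hB x
    _ ≤ b * ((d + |z.re|) ^ p * u) + M * u :=
        add_le_add (mul_le_mul_of_nonneg_left hpow hb) (mul_le_mul_of_nonneg_left hxu hM)
    _ = (b * (d + |z.re|) ^ p + M) / d * ‖T x - z • (x : E)‖ := by rw [hu]; ring

theorem IsSubordinate.exists_isResolventOf_pmSum_of_strip {T B : H →ₗ.[ℂ] H}
    {hle : T.domain ≤ B.domain} {p b M : ℝ} (hB : IsSubordinate T B hle p b M)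
    (hT : T.IsFormalAdjoint T) (hp0 : 0 ≤ p) (hp1 : p ≤ 1) (hb : 0 ≤ b) (hM : 0 ≤ M)
    {r h s q : ℝ} (hgap : ∀ w : ℂ, |w.re - r| < h → w ∈ pmResolventSet T) (hs : s < h)
    (hq1 : q < 1) (hq : b * (|r| + h) ^ p + M ≤ q * (h - s)) {z : ℂ} (hz : |z.re - r| ≤ s) :
    ∃ S : H →L[ℂ] H, IsResolventOf (pmSum T B hle) z S ∧ ‖S‖ ≤ ((1 - q) * (h - s))⁻¹ := by
  have hd : 0 < h - s := sub_pos.mpr hs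
  have hq1' : 0 < 1 - q := sub_pos.mpr hq1
  have hT_lower (x : T.domain) : (h - s) * ‖(x : H)‖ ≤ ‖T x - z • (x : H)‖ :=
    mul_norm_le_norm_sub_smul_of_strip hT hd
      (fun w hw => hgap w (by linarith [abs_sub_le w.re z.re r])) x
  have hz_re : h - s + |z.re| ≤ |r| + h := by linarith [abs_sub_abs_le_abs_sub z.re r]
  have hratio : (b * (h - s + |z.re|) ^ p + M) / (h - s) ≤ q := by
    rw [div_le_iff₀ hd]
    refine le_trans ?_ hq
    gcongr
  have hq0 : 0 ≤ q := le_trans (by positivity) hratio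
  have hB_rel (x : T.domain) : ‖B ⟨(x : H), hle x.2⟩‖ ≤ q * ‖T x - z • (x : H)‖ :=
    (hB.norm_apply_le hT hp0 hp1 hb hM hd (hT_lower x)).trans (by gcongr)
  obtain ⟨R, hR⟩ := hgap z (hz.trans_lt hs)
  obtain ⟨S, hS⟩ := hR.exists_pmSum hle hq0 hq1 hB_rel
  refine ⟨S, hS, hS.norm_le_inv (mul_pos hq1' hd) fun x => ?_⟩
  calc (1 - q) * (h - s) * ‖(x : H)‖ = (1 - q) * ((h - s) * ‖(x : H)‖) := mul_assoc _ _ _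
    _ ≤ (1 - q) * ‖T x - z • (x : H)‖ := by gcongr; exact hT_lower x
    _ ≤ ‖pmSum T B hle x - z • (x : H)‖ := mul_norm_le_norm_pmSum_sub_smul hle (hB_rel x)

section Asymptotics

variable {p c : ℝ}

theorem tendsto_add_mul_rpow_div_self (hp : p < 1) :
    Tendsto (fun ρ : ℝ => (ρ + c * ρ ^ p) / ρ) atTop (𝓝 1) := by
  have hneg : Tendsto (fun ρ : ℝ => ρ ^ (-(1 - p))) atTop (𝓝 0) :=
    tendsto_rpow_neg_atTop (sub_pos.mpr hp)
  have hlim : Tendsto (fun ρ : ℝ => 1 + c * ρ ^ (-(1 - p))) atTop (𝓝 1) := by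
    simpa using (hneg.const_mul c).const_add 1
  refine hlim.congr' ?_
  filter_upwards [eventually_gt_atTop 0] with ρ hρ
  rw [add_div, div_self hρ.ne', mul_div_assoc, neg_sub, Real.rpow_sub_one hρ.ne']

theorem tendsto_subordination_bound_div_rpow (hp0 : 0 ≤ p) (hp1 : p < 1) (hc : 0 ≤ c) (b : ℝ)
    {M : ℝ} (hM : p = 0 → M = 0) :
    Tendsto (fun ρ : ℝ => (b * (ρ + c * ρ ^ p) ^ p + M) / ρ ^ p) atTop (𝓝 b) := by
  have hmain : Tendsto (fun ρ : ℝ => ((ρ + c * ρ ^ p) / ρ) ^ p) atTop (𝓝 1) := by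
    simpa using (tendsto_add_mul_rpow_div_self hp1).rpow_const (p := p) (.inl one_ne_zero)
  have hrest : Tendsto (fun ρ : ℝ => M / ρ ^ p) atTop (𝓝 0) := by
    rcases hp0.eq_or_lt with hp | hp
    · simp [hM hp.symm]
    · exact (tendsto_rpow_atTop hp).const_div_atTop M
  have hlim := (hmain.const_mul b).add hrest
  rw [mul_one, add_zero] at hlim
  refine hlim.congr' ?_
  filter_upwards [eventually_gt_atTop 0] with ρ hρ
  rw [Real.div_rpow (by positivity) hρ.le, add_div, mul_div_assoc]

theorem le_rpow_one_sub_of_mul_rpow_le {t : ℝ} (ht : 0 < t) (h : c * t ^ p ≤ t) :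
    c ≤ t ^ (1 - p) := by
  rwa [Real.rpow_sub ht, Real.rpow_one, le_div_iff₀ (Real.rpow_pos_of_pos ht p)]

-- A finite limit `L` forces `c * |L| ^ p ≤ 0`, so `L = 0`; but then `0 < -u k → 0` satisfies
-- `c ≤ (-u k) ^ (1 - p)`, whose right-hand side tends to `0`.
theorem tendsto_atTop_of_mul_rpow_le_sub (hp : p < 1) (hc : 0 < c) {u : ℤ → ℝ}
    (hu : StrictMono u) (hstep : ∀ k, c * |u k| ^ p ≤ u (k + 1) - u k) :
    Tendsto u atTop atTop := by
  refine (tendsto_atTop_of_monotone hu.monotone).resolve_right ?_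
  rintro ⟨L, hL⟩
  rcases eq_or_ne L 0 with rfl | hL0
  · have hneg (k : ℤ) : u k < 0 :=
      (hu (lt_add_one k)).trans_le (hu.monotone.ge_of_tendsto hL (k + 1))
    have hlower (k : ℤ) : c ≤ |u k| ^ (1 - p) := by
      refine le_rpow_one_sub_of_mul_rpow_le (abs_pos.mpr (hneg k).ne) ?_
      exact (hstep k).trans (by rw [abs_of_neg (hneg k)]; linarith [hneg (k + 1)])
    have hlim : Tendsto (fun k => |u k| ^ (1 - p)) atTop (𝓝 0) := by
      simpa [(sub_pos.mpr hp).ne'] using hL.abs.rpow_const (p := 1 - p) (.inr (sub_pos.mpr hp).le)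
    exact hc.not_ge (ge_of_tendsto' hlim hlower)
  · have hlhs : Tendsto (fun k => c * |u k| ^ p) atTop (𝓝 (c * |L| ^ p)) :=
      (hL.abs.rpow_const (.inl (abs_ne_zero.mpr hL0))).const_mul c
    have hrhs : Tendsto (fun k => u (k + 1) - u k) atTop (𝓝 (L - L)) :=
      (hL.comp (tendsto_atTop_add_const_right _ 1 tendsto_id)).sub hL
    have hle : c * |L| ^ p ≤ L - L := le_of_tendsto_of_tendsto' hlhs hrhs hstep
    have hpos : 0 < c * |L| ^ p := by positivity
    linarith

theorem tendsto_abs_of_mul_rpow_add_le_sub (hp : p < 1) (hc : 0 < c) {u : ℤ → ℝ}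
    (hu : StrictMono u)
    (hstep : ∀ k, c * |u k| ^ p + c * |u (k + 1)| ^ p ≤ u (k + 1) - u k) :
    Tendsto (fun k => |u k|) (comap abs atTop) atTop := by
  have hnonneg (k : ℤ) : 0 ≤ c * |u k| ^ p := by positivity
  have htop : Tendsto u atTop atTop :=
    tendsto_atTop_of_mul_rpow_le_sub hp hc hu fun k => by linarith [hstep k, hnonneg (k + 1)]
  have hbot : Tendsto (fun k => -u (-k)) atTop atTop := by
    refine tendsto_atTop_of_mul_rpow_le_sub hp hc (fun k l hkl => neg_lt_neg (hu (neg_lt_neg hkl)))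
      fun k => ?_
    have hk := hstep (-(k + 1))
    rw [show -(k + 1) + 1 = -k by ring] at hk
    rw [abs_neg]
    linarith [hnonneg (-(k + 1))]
  rw [comap_abs_atTop]
  refine Tendsto.sup ?_ (tendsto_abs_atTop_atTop.comp htop)
  simpa [Function.comp_def] using
    tendsto_abs_atTop_atTop.comp (hbot.comp tendsto_neg_atBot_atTop)

end Asymptotics

section Gaps

variable {α : ℤ → ℝ} {p b₁ : ℝ}

/-- The midpoint `r_k` of the `k`-th spectral gap `(α_{2k}, α_{2k+1})`. -/
def gapMidpoint (α : ℤ → ℝ) (k : ℤ) : ℝ := (α (2 * k) + α (2 * k + 1)) / 2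

/-- Half the length of the `k`-th spectral gap `(α_{2k}, α_{2k+1})`. -/
def gapRadius (α : ℤ → ℝ) (k : ℤ) : ℝ := (α (2 * k + 1) - α (2 * k)) / 2

theorem mul_rpow_abs_gapMidpoint_le_gapRadius {k : ℤ}
    (hgap : (2 : ℝ) ^ (1 - p) * b₁ * |α (2 * k + 1) + α (2 * k)| ^ p ≤
      α (2 * k + 1) - α (2 * k)) :
    b₁ * |gapMidpoint α k| ^ p ≤ gapRadius α k := by
  have hsum : α (2 * k + 1) + α (2 * k) = 2 * gapMidpoint α k := by rw [gapMidpoint]; ring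
  have htwo : (2 : ℝ) ^ (1 - p) * 2 ^ p = 2 := by
    rw [← Real.rpow_add two_pos, sub_add_cancel, Real.rpow_one]
  rw [gapRadius, le_div_iff₀ two_pos]
  calc b₁ * |gapMidpoint α k| ^ p * 2
      = 2 ^ (1 - p) * b₁ * (2 ^ p * |gapMidpoint α k| ^ p) := by
        linear_combination -(b₁ * |gapMidpoint α k| ^ p) * htwo
    _ = 2 ^ (1 - p) * b₁ * |α (2 * k + 1) + α (2 * k)| ^ p := by
        rw [hsum, abs_mul, abs_two, Real.mul_rpow two_pos.le (abs_nonneg _)]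
    _ ≤ α (2 * k + 1) - α (2 * k) := hgap

theorem gapRadius_pos_of_disjoint (hα : Monotone α) {k : ℤ}
    (hdisj : Disjoint (Set.Icc (α (2 * k - 1)) (α (2 * k)))
      (Set.Icc (α (2 * (k + 1) - 1)) (α (2 * (k + 1))))) : 0 < gapRadius α k := by
  rw [gapRadius]
  by_contra! hle
  have hend : α (2 * k) ∈ Set.Icc (α (2 * (k + 1) - 1)) (α (2 * (k + 1))) := by
    rw [show 2 * (k + 1) - 1 = 2 * k + 1 by ring]
    exact ⟨by linarith, hα (by lia)⟩
  exact Set.disjoint_left.mp hdisj ⟨hα (by lia), le_rfl⟩ hend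

theorem gapRadius_add_gapRadius_le (hα : Monotone α) (k : ℤ) :
    gapRadius α k + gapRadius α (k + 1) ≤ gapMidpoint α (k + 1) - gapMidpoint α k := by
  have hband : α (2 * k + 1) ≤ α (2 * (k + 1)) := hα (by lia)
  simp only [gapRadius, gapMidpoint]
  linarith

theorem tendsto_abs_gapMidpoint (hp : p < 1) (hb₁ : 0 < b₁) (hα : Monotone α)
    (hpos : ∀ k, 0 < gapRadius α k)
    (hgap : ∀ k, b₁ * |gapMidpoint α k| ^ p ≤ gapRadius α k) :
    Tendsto (fun k => |gapMidpoint α k|) (comap abs atTop) atTop := by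
  have hstep := gapRadius_add_gapRadius_le hα
  have hr : StrictMono (gapMidpoint α) :=
    strictMono_int_of_lt_succ fun k => by linarith [hstep k, hpos k, hpos (k + 1)]
  exact tendsto_abs_of_mul_rpow_add_le_sub hp hb₁ hr fun k =>
    (add_le_add (hgap k) (hgap (k + 1))).trans (hstep k)

theorem mem_pmResolventSet_of_abs_re_sub_gapMidpoint_lt {T : E →ₗ.[ℂ] E} (hα : Monotone α)
    (hspec : pmSpectrum T ⊆ ⋃ k : ℤ, Complex.ofReal '' Set.Icc (α (2 * k - 1)) (α (2 * k)))
    {k : ℤ} {w : ℂ} (hw : |w.re - gapMidpoint α k| < gapRadius α k) : w ∈ pmResolventSet T := by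
  by_contra hmem
  obtain ⟨l, t, ⟨ht₁, ht₂⟩, rfl⟩ := Set.mem_iUnion.mp (hspec hmem)
  rw [Complex.ofReal_re, gapMidpoint, gapRadius, abs_lt] at hw
  rcases le_or_gt l k with hlk | hkl
  · have hleft : α (2 * l) ≤ α (2 * k) := hα (by lia)
    linarith
  · have hright : α (2 * k + 1) ≤ α (2 * l - 1) := hα (by lia)
    linarith

end Gaps

/-- Let `T` be self-adjoint with spectrum in the pairwise disjoint intervals
`Δ_k = [α_{2k−1}, α_{2k}]`, `k ∈ ℤ`, whose gaps satisfy
`α_{2k+1} − α_{2k} ≥ 2^{1−p} b₁ |α_{2k+1} + α_{2k}|^p` with `b₁ > 0`, `p ∈ [0,1)`.  Let `B` be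
`p`-subordinate to `T` with subordination bound `b' < b₁`, and `A = T + B`.  Then for every
`δ ∈ (0, b₁ − b')` there are `N ∈ ℕ` and `C > 0` such that for all `|k| ≥ N` the vertical strip
`Ω_k = {|Re λ − r_k| ≤ δ|r_k|^p}`, `r_k = (α_{2k} + α_{2k+1})/2`, lies in the resolvent set of
`A` with `‖(A − λ)⁻¹‖ ≤ C·|r_k|^{−p}` there. -/
theorem stmt19 (T B : H →ₗ.[ℂ] H) (p b₁ b' : ℝ) (hp : p ∈ Set.Ico (0 : ℝ) 1) (hb₁ : 0 < b₁)
    (hsa : IsSelfAdjoint T) (α : ℤ → ℝ) (hmono : Monotone α)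
    (hdisj : ∀ k l : ℤ, k ≠ l →
      Disjoint (Set.Icc (α (2 * k - 1)) (α (2 * k))) (Set.Icc (α (2 * l - 1)) (α (2 * l))))
    (hgap : ∀ k : ℤ,
      (2 : ℝ) ^ (1 - p) * b₁ * |α (2 * k + 1) + α (2 * k)| ^ p ≤ α (2 * k + 1) - α (2 * k))
    (hspec : pmSpectrum T ⊆ ⋃ k : ℤ, Complex.ofReal '' Set.Icc (α (2 * k - 1)) (α (2 * k)))
    (hle : T.domain ≤ B.domain) (hb' : IsGLB (SubordSet T B hle p) b') (hbb : b' < b₁) :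
    ∀ δ : ℝ, 0 < δ → δ < b₁ - b' →
      ∃ (N : ℕ) (C : ℝ), 0 < C ∧
        ∀ k : ℤ, (N : ℤ) ≤ |k| →
          ∀ z : ℂ, |z.re - (α (2 * k) + α (2 * k + 1)) / 2| ≤
              δ * |(α (2 * k) + α (2 * k + 1)) / 2| ^ p →
            ∃ R : H →L[ℂ] H, IsResolventOf (pmSum T B hle) z R ∧
              ‖R‖ ≤ C * (|(α (2 * k) + α (2 * k + 1)) / 2| ^ p)⁻¹ := by
  intro δ _ hδb
  obtain ⟨b, ⟨hb, M, hM, hM0, hB⟩, hbδ⟩ := (isGLB_lt_iff hb').mp (lt_sub_comm.mp hδb)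
  have he : 0 < b₁ - δ := hb.trans hbδ
  obtain ⟨q, hbq, hq1⟩ := exists_between ((div_lt_one he).mpr hbδ)
  have hT : T.IsFormalAdjoint T := isFormalAdjoint_self_of_isSelfAdjoint hsa
  have hradius (k : ℤ) := mul_rpow_abs_gapMidpoint_le_gapRadius (hgap k)
  have hlarge : ∀ᶠ ρ : ℝ in atTop, 0 < ρ ∧ (b * (ρ + b₁ * ρ ^ p) ^ p + M) / ρ ^ p < q * (b₁ - δ) :=
    (eventually_gt_atTop 0).and ((tendsto_subordination_bound_div_rpow hp.1 hp.2 hb₁.le b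
      hM0).eventually_lt_const ((div_lt_iff₀ he).mp hbq))
  have hr := tendsto_abs_gapMidpoint hp.2 hb₁ hmono
    (fun k => gapRadius_pos_of_disjoint hmono (hdisj k (k + 1) (by lia))) hradius
  obtain ⟨N, -, hN⟩ := (atTop_basis.comap abs).eventually_iff.mp (hr.eventually hlarge)
  refine ⟨N.toNat, ((1 - q) * (b₁ - δ))⁻¹, inv_pos.mpr (mul_pos (sub_pos.mpr hq1) he),
    fun k hk z hz => ?_⟩
  obtain ⟨hρ, hbound⟩ := hN ((Int.self_le_toNat N).trans hk)
  have hρp : 0 < |gapMidpoint α k| ^ p := Real.rpow_pos_of_pos hρ p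
  rw [div_lt_iff₀ hρp, mul_assoc, sub_mul] at hbound
  rw [← mul_inv, mul_assoc, sub_mul b₁]
  exact IsSubordinate.exists_isResolventOf_pmSum_of_strip hB hT hp.1 hp.2.le hb.le hM
    (fun w hw => mem_pmResolventSet_of_abs_re_sub_gapMidpoint_lt hmono hspec
      (hw.trans_le (hradius k))) (by gcongr; linarith) hq1 hbound.le hz
end
end
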